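/- arXiv:2511.05758 — 5 statements merged into one kernel-verified Lean document; each statement's English description precedes it below -/
import Mathlib

section
/- Let S be a finite nonempty type, let p be a probability vector on S, let R ≥ 0, and let V : S → ℝ. Then the minimum over all probability vectors q on S satisfying (1/2)·∑_s |q s − p s| ≤ R of ∑_s q s · V s equals the supremum over all μ : S → ℝ with μ s ≥ 0 for all s of (∑_s p s · (V s − μ s)) − R · sp(V − μ), where sp denotes the span semi-norm. (This is the dual formulation (Eq. 8) of the support function of the total-variation uncertainty set.) -/
/-!
Weak duality holds because `q - p` has total mass zero, so pairing it with `W = V - μ` is the same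
as pairing it with `W` centred at the midpoint of its range, where `|W| ≤ sp(W) / 2`; as
`∑ |q - p| ≤ 2 R`, this costs at most `R · sp(W)` (`weak_duality`).

Equality is witnessed by an explicit primal-dual pair. For `R ≤ 1` pick an upper quantile `t` of
`V`, with `P(V > t) ≤ R ≤ P(V ≥ t)`. The primal optimum moves mass `R` from the top of `V`
(everything above level `t`, and a fraction of level `t`) to a minimiser of `V`; the dual optimum is
`μ = (V - t)⁺`, which truncates `V` to `min(V, t)`. For `R ≥ 1` all the mass is moved and `t` is
the minimum of `V` (`exists_threshold`, `exists_certificate`). Both extrema are thus attained.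
-/

/-- The span semi-norm of a function `W : S → ℝ` on a finite nonempty type:
`sp(W) = (max_s W s) − (min_s W s)`. -/
noncomputable def spanSeminorm {S : Type*} [Fintype S] [Nonempty S] (W : S → ℝ) : ℝ :=
  Finset.univ.sup' Finset.univ_nonempty W - Finset.univ.inf' Finset.univ_nonempty W

lemma weak_duality {S : Type*} [Fintype S] [Nonempty S]
    (p : S → ℝ) (hp1 : ∑ s, p s = 1) {R : ℝ} (V q μ : S → ℝ)
    (hq0 : ∀ s, 0 ≤ q s) (hq1 : ∑ s, q s = 1) (hqR : (1 / 2) * (∑ s, |q s - p s|) ≤ R)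
    (hμ : ∀ s, 0 ≤ μ s) :
    (∑ s, p s * (V s - μ s)) - R * spanSeminorm (V - μ) ≤ ∑ s, q s * V s := by
  unfold spanSeminorm
  set M := Finset.univ.sup' Finset.univ_nonempty (V - μ)
  set m := Finset.univ.inf' Finset.univ_nonempty (V - μ)
  have hM : ∀ s, V s - μ s ≤ M := fun s => Finset.le_sup' (V - μ) (Finset.mem_univ s)
  have hm : ∀ s, m ≤ V s - μ s := fun s => Finset.inf'_le (V - μ) (Finset.mem_univ s)
  have hmM : 0 ≤ M - m := by
    obtain ⟨s⟩ := ‹Nonempty S›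
    linarith [hM s, hm s]
  have hterm : ∀ s, p s * (V s - μ s) - q s * V s
      ≤ |q s - p s| * ((M - m) / 2) + (p s - q s) * ((M + m) / 2) := by
    intro s
    have h1 : (p s - q s) * (V s - μ s - (M + m) / 2) ≤ |q s - p s| * ((M - m) / 2) := by
      refine (le_abs_self _).trans ?_
      rw [abs_mul, abs_sub_comm]
      refine mul_le_mul_of_nonneg_left ?_ (abs_nonneg _)
      rw [abs_le]
      constructor <;> linarith [hM s, hm s]
    nlinarith [mul_nonneg (hq0 s) (hμ s)]
  have hsum := Finset.sum_le_sum fun s (_ : s ∈ Finset.univ) => hterm s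
  rw [Finset.sum_sub_distrib, Finset.sum_add_distrib, ← Finset.sum_mul, ← Finset.sum_mul,
    Finset.sum_sub_distrib, hp1, hq1] at hsum
  nlinarith [mul_le_mul_of_nonneg_right hqR hmM]

/-- An upper `r`-quantile `V s₁` of `V` under `p`, with the retained fractions `a` after removing
mass exactly `r` from the top of `V`; ties at the level `V s₁` are split proportionally. -/
lemma exists_threshold {S : Type*} [Fintype S] [Nonempty S]
    (p : S → ℝ) (hp0 : ∀ s, 0 ≤ p s) (hp1 : ∑ s, p s = 1) (V : S → ℝ)
    (r : ℝ) (hr0 : 0 ≤ r) (hr1 : r ≤ 1) :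
    ∃ (s₁ : S) (a : S → ℝ), (∀ s, 0 ≤ a s) ∧ (∀ s, a s ≤ 1) ∧ ∑ s, p s * a s = 1 - r ∧
      (∀ s, V s < V s₁ → a s = 1) ∧ (∀ s, V s₁ < V s → a s = 0) := by
  classical
  obtain ⟨sM, -, hsM⟩ := Finset.exists_max_image Finset.univ V Finset.univ_nonempty
  have hne : (Finset.univ.filter fun s => ∑ x, (if V s < V x then p x else 0) ≤ r).Nonempty := by
    refine ⟨sM, ?_⟩
    rw [Finset.mem_filter]
    refine ⟨Finset.mem_univ _, ?_⟩
    rw [Finset.sum_eq_zero]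
    · exact hr0
    · intro x hx
      rw [if_neg (not_lt.mpr (hsM x hx))]
  obtain ⟨s₁, hs₁, hmin⟩ := Finset.exists_min_image _ V hne
  have hup : ∑ x, (if V s₁ < V x then p x else 0) ≤ r := (Finset.mem_filter.mp hs₁).2
  have hA : ∑ x, (if V x < V s₁ then p x else 0) ≤ 1 - r := by
    rcases (Finset.univ.filter fun s => V s < V s₁).eq_empty_or_nonempty with he | hn
    · rw [Finset.sum_eq_zero]
      · linarith
      · intro x _
        exact if_neg fun h => Finset.notMem_empty x
          (he ▸ Finset.mem_filter.mpr ⟨Finset.mem_univ x, h⟩)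
    -- `V u` is the largest value below `V s₁`; by minimality of `V s₁`, `P(V > V u) > r`.
    · obtain ⟨u, hu, humax⟩ := Finset.exists_max_image _ V hn
      have hu1 : V u < V s₁ := (Finset.mem_filter.mp hu).2
      have hur : r < ∑ x, (if V u < V x then p x else 0) := by
        by_contra! hcon
        exact absurd (hmin u (Finset.mem_filter.mpr ⟨Finset.mem_univ _, hcon⟩)) (not_le.mpr hu1)
      have hsplit : ∑ x, (if V x < V s₁ then p x else 0) + ∑ x, (if V u < V x then p x else 0)
          = 1 := by
        rw [← Finset.sum_add_distrib, ← hp1]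
        refine Finset.sum_congr rfl fun x _ => ?_
        by_cases hx : V x < V s₁
        · have := humax x (Finset.mem_filter.mpr ⟨Finset.mem_univ _, hx⟩)
          simp [hx, not_lt.mpr this]
        · have : V u < V x := lt_of_lt_of_le hu1 (not_lt.mp hx)
          simp [hx, this]
      linarith
  have hABC : ∑ x, (if V x < V s₁ then p x else 0) + ∑ x, (if V x = V s₁ then p x else 0)
      + ∑ x, (if V s₁ < V x then p x else 0) = 1 := by
    rw [← Finset.sum_add_distrib, ← Finset.sum_add_distrib, ← hp1]
    refine Finset.sum_congr rfl fun x _ => ?_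
    rcases lt_trichotomy (V x) (V s₁) with h | h | h
    · simp [h, h.ne, h.not_gt]
    · simp [h]
    · simp [h, h.ne', h.not_gt]
  set A := ∑ x, (if V x < V s₁ then p x else 0) with hAdef
  set B := ∑ x, (if V x = V s₁ then p x else 0) with hBdef
  have hB : 0 ≤ B := Finset.sum_nonneg fun x _ => by split_ifs <;> simp [hp0]
  obtain ⟨θ, hθ0, hθ1, hθ⟩ : ∃ θ : ℝ, 0 ≤ θ ∧ θ ≤ 1 ∧ A + θ * B = 1 - r := by
    rcases hB.eq_or_lt with h | h
    · exact ⟨0, le_rfl, zero_le_one, by linarith⟩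
    · refine ⟨(1 - r - A) / B, div_nonneg (by linarith) hB, ?_, ?_⟩
      · rw [div_le_one h]
        linarith
      · rw [div_mul_cancel₀ _ h.ne']
        ring
  refine ⟨s₁, fun s => if V s < V s₁ then 1 else if V s = V s₁ then θ else 0, ?_, ?_, ?_, ?_, ?_⟩
  · intro s
    dsimp only
    split_ifs <;> linarith
  · intro s
    dsimp only
    split_ifs <;> linarith
  · rw [← hθ, hAdef, hBdef, Finset.mul_sum, ← Finset.sum_add_distrib]
    refine Finset.sum_congr rfl fun x _ => ?_
    rcases lt_trichotomy (V x) (V s₁) with h | h | h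
    · simp [h, h.ne]
    · simp [h, mul_comm]
    · simp [h.ne', h.not_gt]
  · intro s hs
    simp [hs]
  · intro s hs
    simp [hs.ne', hs.not_gt]

/-- Moving the removed mass `r` to the minimiser `s₀` gives a primal point with the same value as
the dual point `μ = (V - V s₁)⁺`. The radius `R` may exceed `r` as long as
`(R - r) · (V s₁ - V s₀) = 0`, which covers `R > 1` with `r = 1` and `s₁ = s₀`. -/
lemma exists_certificate {S : Type*} [Fintype S] [Nonempty S]
    (p : S → ℝ) (hp0 : ∀ s, 0 ≤ p s) (hp1 : ∑ s, p s = 1) (V : S → ℝ)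
    {s₀ : S} (hs₀ : ∀ s, V s₀ ≤ V s) (s₁ : S) (a : S → ℝ)
    (ha0 : ∀ s, 0 ≤ a s) (ha1 : ∀ s, a s ≤ 1) {r R : ℝ} (hr0 : 0 ≤ r) (hrR : r ≤ R)
    (hRr : R * (V s₁ - V s₀) = r * (V s₁ - V s₀)) (hsum : ∑ s, p s * a s = 1 - r)
    (hlt : ∀ s, V s < V s₁ → a s = 1) (hgt : ∀ s, V s₁ < V s → a s = 0) :
    ∃ q μ : S → ℝ, (∀ s, 0 ≤ q s) ∧ ∑ s, q s = 1 ∧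
      (1 / 2) * (∑ s, |q s - p s|) ≤ R ∧ (∀ s, 0 ≤ μ s) ∧
      ∑ s, q s * V s = (∑ s, p s * (V s - μ s)) - R * spanSeminorm (V - μ) := by
  classical
  have hδ : ∀ s, 0 ≤ (if s = s₀ then r else 0) := fun s => by split_ifs <;> linarith
  have hδsum : ∑ s, (if s = s₀ then r else 0) = r := by simp
  refine ⟨fun s => p s * a s + if s = s₀ then r else 0, fun s => max (V s - V s₁) 0,
    fun s => add_nonneg (mul_nonneg (hp0 s) (ha0 s)) (hδ s), ?_, ?_, fun s => le_max_right _ _, ?_⟩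
  · rw [Finset.sum_add_distrib, hsum, hδsum]
    ring
  · have hterm : ∀ s, |p s * a s + (if s = s₀ then r else 0) - p s|
        ≤ (p s - p s * a s) + if s = s₀ then r else 0 := by
      intro s
      have := mul_le_mul_of_nonneg_left (ha1 s) (hp0 s)
      rw [abs_le]
      constructor <;> linarith [hδ s]
    have h := Finset.sum_le_sum fun s (_ : s ∈ Finset.univ) => hterm s
    rw [Finset.sum_add_distrib, Finset.sum_sub_distrib, hsum, hp1, hδsum] at h
    dsimp only
    linarith
  · have hspan : spanSeminorm (V - fun s => max (V s - V s₁) 0) = V s₁ - V s₀ := by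
      unfold spanSeminorm
      congr 1
      · apply le_antisymm
        · refine Finset.sup'_le _ _ fun s _ => ?_
          simp only [Pi.sub_apply]
          linarith [le_max_left (V s - V s₁) 0]
        · refine le_trans ?_ (Finset.le_sup' _ (Finset.mem_univ s₁))
          simp
      · apply le_antisymm
        · refine (Finset.inf'_le _ (Finset.mem_univ s₀)).trans ?_
          simp
        · refine Finset.le_inf' _ _ fun s _ => ?_
          simp only [Pi.sub_apply]
          rcases max_cases (V s - V s₁) 0 with h | h <;> linarith [hs₀ s, hs₀ s₁]
    rw [hspan, hRr]
    have hval : ∑ s, (if s = s₀ then r else 0) * V s = r * V s₀ := by simp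
    -- Complementary slackness, state by state.
    have hterm : ∀ s, p s * a s * V s
        = p s * (V s - max (V s - V s₁) 0) + (p s * a s - p s) * V s₁ := by
      intro s
      rcases lt_trichotomy (V s) (V s₁) with h | h | h
      · rw [hlt s h, max_eq_right (by linarith)]
        ring
      · rw [h, sub_self, max_self]
        ring
      · rw [hgt s h, max_eq_left (by linarith)]
        ring
    simp only [add_mul]
    rw [Finset.sum_add_distrib, hval, Finset.sum_congr rfl fun s _ => hterm s,
      Finset.sum_add_distrib, ← Finset.sum_mul, Finset.sum_sub_distrib, hsum, hp1]
    ring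

/-- Dual formulation of the support function of the total-variation
uncertainty set: the minimum over all probability vectors `q` with
`(1/2)·∑ s, |q s − p s| ≤ R` of `∑ s, q s · V s` equals the supremum over all
`μ : S → ℝ` with `μ ≥ 0` of `(∑ s, p s · (V s − μ s)) − R · sp(V − μ)`. -/
theorem tv_support_function_duality {S : Type*} [Fintype S] [Nonempty S]
    (p : S → ℝ) (hp0 : ∀ s, 0 ≤ p s) (hp1 : ∑ s, p s = 1)
    (R : ℝ) (hR : 0 ≤ R) (V : S → ℝ) :
    sInf {x : ℝ | ∃ q : S → ℝ, (∀ s, 0 ≤ q s) ∧ (∑ s, q s = 1) ∧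
        (1 / 2) * (∑ s, |q s - p s|) ≤ R ∧ x = ∑ s, q s * V s}
      =
    sSup {y : ℝ | ∃ μ : S → ℝ, (∀ s, 0 ≤ μ s) ∧
        y = (∑ s, p s * (V s - μ s)) - R * spanSeminorm (V - μ)} := by
  classical
  obtain ⟨s₀, -, hs₀⟩ := Finset.exists_min_image Finset.univ V Finset.univ_nonempty
  replace hs₀ : ∀ s, V s₀ ≤ V s := fun s => hs₀ s (Finset.mem_univ s)
  -- The whole mass can be moved once `R ≥ 1`; the threshold is then the minimum of `V`.
  have hcert : ∃ q μ : S → ℝ, (∀ s, 0 ≤ q s) ∧ ∑ s, q s = 1 ∧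
      (1 / 2) * (∑ s, |q s - p s|) ≤ R ∧ (∀ s, 0 ≤ μ s) ∧
      ∑ s, q s * V s = (∑ s, p s * (V s - μ s)) - R * spanSeminorm (V - μ) := by
    rcases le_total R 1 with h | h
    · obtain ⟨s₁, a, ha0, ha1, hsum, hlt, hgt⟩ := exists_threshold p hp0 hp1 V R hR h
      exact exists_certificate p hp0 hp1 V hs₀ s₁ a ha0 ha1 hR le_rfl rfl hsum hlt hgt
    · exact exists_certificate p hp0 hp1 V hs₀ s₀ (fun _ => 0) (fun _ => le_rfl)
        (fun _ => zero_le_one) zero_le_one h (by simp) (by simp)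
        (fun s hs => absurd (hs₀ s) (not_le.mpr hs)) (fun _ _ => rfl)
  obtain ⟨q, μ, hq0, hq1, hqR, hμ, heq⟩ := hcert
  have hleast : IsLeast {x : ℝ | ∃ q : S → ℝ, (∀ s, 0 ≤ q s) ∧ (∑ s, q s = 1) ∧
        (1 / 2) * (∑ s, |q s - p s|) ≤ R ∧ x = ∑ s, q s * V s} (∑ s, q s * V s) := by
    refine ⟨⟨q, hq0, hq1, hqR, rfl⟩, ?_⟩
    rintro x ⟨q', h0, h1, h2, rfl⟩
    rw [heq]
    exact weak_duality p hp1 V q' μ h0 h1 h2 hμ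
  have hgreatest : IsGreatest {y : ℝ | ∃ μ : S → ℝ, (∀ s, 0 ≤ μ s) ∧
        y = (∑ s, p s * (V s - μ s)) - R * spanSeminorm (V - μ)} (∑ s, q s * V s) := by
    refine ⟨⟨μ, hμ, heq⟩, ?_⟩
    rintro y ⟨μ', h0, rfl⟩
    exact weak_duality p hp1 V q μ' hq0 hq1 hqR h0
  rw [hleast.csInf_eq, hgreatest.csSup_eq]
end

section
/- Let Π be a nonempty type, let I ≥ 1, let g⁰ : Π → ℝ be an objective with g⁰ π ≥ 0 for all π, let gⁱ : Fin I → Π → ℝ be constraint values, let b : Fin I → ℝ be thresholds, let ζ ≥ 0 and λ > 0, and define F π = max( g⁰ π / λ , max_{i} ( gⁱ i π − b i + ζ ) ). Suppose π* ∈ Π satisfies gⁱ i π* − b i + ζ ≤ 0 for every i, and suppose π̂ ∈ Π satisfies F π̂ ≤ F π* . Then g⁰ π̂ ≤ g⁰ π*. (Optimality part of Lemma 2: a minimizer of the surrogate objective F has objective value no larger than that of any feasible policy.) -/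
/-- optimality part of Lemma 2. For the surrogate objective
`F π = max( g⁰ π / λ , max_i ( gⁱ i π − b i + ζ ) )`, if `π*` satisfies all
slack constraints (`gⁱ i π* − b i + ζ ≤ 0`) and `π̂` satisfies `F π̂ ≤ F π*`,
then `g⁰ π̂ ≤ g⁰ π*`. -/
theorem surrogate_optimality {Pol : Type*} [Nonempty Pol]
    (I : ℕ) (hI : 1 ≤ I)
    (g0 : Pol → ℝ) (hg0 : ∀ π, 0 ≤ g0 π)
    (g : Fin I → Pol → ℝ) (b : Fin I → ℝ)
    (ζ : ℝ) (hζ : 0 ≤ ζ) (lam : ℝ) (hlam : 0 < lam)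
    (F : Pol → ℝ)
    (hF : ∀ π, F π = max (g0 π / lam)
      (Finset.univ.sup' (Finset.univ_nonempty_iff.mpr (Fin.pos_iff_nonempty.mp hI))
        fun i => g i π - b i + ζ))
    (πstar : Pol) (hfeas : ∀ i, g i πstar - b i + ζ ≤ 0)
    (πhat : Pol) (hopt : F πhat ≤ F πstar) :
    g0 πhat ≤ g0 πstar := by
  -- Since `g0 ≥ 0`, the slack constraints are dominated at `πstar`: `F πstar = g0 πstar / lam`.
  have hstar : F πstar ≤ g0 πstar / lam := by
    rw [hF]
    exact max_le le_rfl (Finset.sup'_le _ _ fun i _ =>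
      (hfeas i).trans (div_nonneg (hg0 πstar) hlam.le))
  have hhat : g0 πhat / lam ≤ F πhat := by
    rw [hF]
    exact le_max_left _ _
  exact (div_le_div_iff_of_pos_right hlam).mp (hhat.trans (hopt.trans hstar))
end

section
/- Let Π be a nonempty type, let I ≥ 1, let g⁰ : Π → ℝ, gⁱ : Fin I → Π → ℝ, b : Fin I → ℝ, let ζ > 0, set λ = 4/ζ, and define F π = max( g⁰ π / λ , max_i ( gⁱ i π − b i + ζ ) ). Suppose π* ∈ Π satisfies the slackness condition gⁱ i π* − b i ≤ −ζ for every i, and g⁰ π* ≤ 1. If π̂ ∈ Π satisfies F π̂ ≤ F π*, then gⁱ i π̂ − b i ≤ −ζ/2 for every i; in particular π̂ is exactly feasible (gⁱ i π̂ ≤ b i for all i). (Feasibility part of Lemma 2 under the slackness assumption: with λ = 4/ζ the minimizer of F is exactly feasible.) -/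
/-- feasibility part of Lemma 2, with slackness. With `λ = 4/ζ`
and surrogate objective `F π = max( g⁰ π / λ , max_i ( gⁱ i π − b i + ζ ) )`,
if `π*` satisfies the slackness condition `gⁱ i π* − b i ≤ −ζ` for all `i` with
`g⁰ π* ≤ 1`, and `F π̂ ≤ F π*`, then `gⁱ i π̂ − b i ≤ −ζ/2` for every `i`;
in particular `π̂` is exactly feasible. -/
theorem surrogate_feasibility_with_slack {Pol : Type*} [Nonempty Pol]
    (I : ℕ) (hI : 1 ≤ I)
    (g0 : Pol → ℝ) (g : Fin I → Pol → ℝ) (b : Fin I → ℝ)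
    (ζ : ℝ) (hζ : 0 < ζ) (lam : ℝ) (hlam : lam = 4 / ζ)
    (F : Pol → ℝ)
    (hF : ∀ π, F π = max (g0 π / lam)
      (Finset.univ.sup' (Finset.univ_nonempty_iff.mpr (Fin.pos_iff_nonempty.mp hI))
        fun i => g i π - b i + ζ))
    (πstar : Pol) (hslack : ∀ i, g i πstar - b i ≤ -ζ) (hbound : g0 πstar ≤ 1)
    (πhat : Pol) (hopt : F πhat ≤ F πstar) :
    (∀ i, g i πhat - b i ≤ -(ζ / 2)) ∧ (∀ i, g i πhat ≤ b i) := by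
  -- Since `1 / lam = ζ / 4`, both parts of the surrogate are at most `ζ / 4` at `πstar`.
  have hstar : F πstar ≤ ζ / 4 := by
    rw [hF]
    refine max_le ?_ (Finset.sup'_le _ _ fun i _ => ?_)
    · rw [hlam, div_div_eq_mul_div]
      nlinarith
    · linarith [hslack i]
  have hhat : ∀ i, g i πhat - b i + ζ ≤ F πhat := fun i => by
    rw [hF]
    exact le_max_of_le_right
      (Finset.le_sup' (fun i => g i πhat - b i + ζ) (Finset.mem_univ i))
  -- Hence `g i πhat - b i ≤ -(3 / 4) * ζ`, which is stronger than both claims.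
  exact ⟨fun i => by linarith [hhat i], fun i => by linarith [hhat i]⟩
end

section
/- Let n ≥ 1 and let K be the standard probability simplex in ℝⁿ, i.e. K = { p : Fin n → ℝ | p i ≥ 0 for all i, ∑_i p i = 1 }. Let T ≥ 1, η > 0, Q_max ≥ 0, ε ≥ 0, and let Q_t, Q̂_t ∈ ℝⁿ for t = 0,…,T−1 satisfy ‖Q̂_t‖₂ ≤ Q_max (Euclidean norm) and ‖Q̂_t − Q_t‖_∞ ≤ ε (sup norm). Let π_0 ∈ K, and for each t let π_{t+1} ∈ K minimize p ↦ η·⟨Q̂_t, p⟩ + ‖p − π_t‖₂² over K. Then for every z ∈ K: (1/T)·∑_{t=0}^{T−1} ⟨Q_t, π_t − z⟩ ≤ η·Q_max²/2 + ‖z − π_0‖₂²/(η·T) + 2ε. (Telescoped mirror-descent regret bound with inexact gradient estimates, as used in the proof of Theorem 4.) -/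
/-!
The simplex is convex, so comparing the minimizer `x⁺` with the points `x⁺ + s (z - x⁺)` for small
`s > 0` gives the first-order optimality condition `0 ≤ η ⟪q, z - x⁺⟫ + 2 ⟪x⁺ - x, z - x⁺⟫`
(`prox_first_order`). Expanding `‖z - x‖²` around `x⁺` and absorbing `η ⟪q, x - x⁺⟫` into
`‖x⁺ - x‖²` by completing the square gives the one-step bound
`η ⟪q, x - z⟫ ≤ ‖z - x‖² - ‖z - x⁺‖² + η² ‖q‖² / 4` (`prox_step`), which telescopes. Replacing the
estimate `q` by the true gradient costs at most `ε ‖x - z‖₁ ≤ 2 ε` per step (`inner_error_le`).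
The stated constant `1/2` in front of `η Qmax²` is thus weaker than the `1/4` obtained.
-/

open RealInnerProductSpace

section Prox

variable {E : Type*} [NormedAddCommGroup E] [InnerProductSpace ℝ E]

/-- First-order optimality condition for the proximal step over a convex set. -/
lemma prox_first_order {K : Set E} (hK : Convex ℝ K) {η : ℝ} {q x y z : E}
    (hy : y ∈ K) (hz : z ∈ K)
    (hmin : ∀ p ∈ K, η * ⟪q, y⟫ + ‖y - x‖ ^ 2 ≤ η * ⟪q, p⟫ + ‖p - x‖ ^ 2) :
    0 ≤ η * ⟪q, z - y⟫ + 2 * ⟪y - x, z - y⟫ := by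
  have key : ∀ s : ℝ, 0 < s → s ≤ 1 →
      0 ≤ (η * ⟪q, z - y⟫ + 2 * ⟪y - x, z - y⟫) + s * ‖z - y‖ ^ 2 := by
    intro s hs hs1
    have h := hmin _ (hK.add_smul_sub_mem hy hz ⟨hs.le, hs1⟩)
    have e : y + s • (z - y) - x = (y - x) + s • (z - y) := by abel
    rw [e, norm_add_sq_real, inner_add_right, inner_smul_right, inner_smul_right, norm_smul,
      mul_pow, Real.norm_eq_abs, sq_abs] at h
    have h2 : 0 ≤ s * ((η * ⟪q, z - y⟫ + 2 * ⟪y - x, z - y⟫) + s * ‖z - y‖ ^ 2) := by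
      linarith
    exact nonneg_of_mul_nonneg_right h2 hs
  by_contra! hneg
  set A := η * ⟪q, z - y⟫ + 2 * ⟪y - x, z - y⟫
  set B := ‖z - y‖ ^ 2
  have hB : 0 ≤ B := sq_nonneg _
  -- For `A < 0` the step size `s = -A / (B + 1 - A) ∈ (0, 1]` makes `A + s * B` negative.
  have hD : 0 < B + 1 - A := by linarith
  have h := key (-A / (B + 1 - A)) (div_pos (by linarith) hD)
    ((div_le_one hD).2 (by linarith))
  have h3 : A + -A / (B + 1 - A) * B = A * (1 - A) / (B + 1 - A) := by
    field_simp
    ring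
  rw [h3] at h
  have h4 : A * (1 - A) / (B + 1 - A) < 0 :=
    div_neg_of_neg_of_pos (mul_neg_of_neg_of_pos hneg (by linarith)) hD
  linarith

lemma prox_step {K : Set E} (hK : Convex ℝ K) {η : ℝ} {q x y z : E}
    (hy : y ∈ K) (hz : z ∈ K)
    (hmin : ∀ p ∈ K, η * ⟪q, y⟫ + ‖y - x‖ ^ 2 ≤ η * ⟪q, p⟫ + ‖p - x‖ ^ 2) :
    η * ⟪q, x - z⟫ ≤ ‖z - x‖ ^ 2 - ‖z - y‖ ^ 2 + η ^ 2 * ‖q‖ ^ 2 / 4 := by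
  have h1 := prox_first_order hK hy hz hmin
  have h2 : ‖z - x‖ ^ 2 = ‖y - x‖ ^ 2 + 2 * ⟪y - x, z - y⟫ + ‖z - y‖ ^ 2 := by
    rw [← norm_add_sq_real]
    congr 2
    abel
  have h3 : 0 ≤ ‖(η / 2) • q + (y - x)‖ ^ 2 := sq_nonneg _
  rw [norm_add_sq_real, real_inner_smul_left, norm_smul, mul_pow, Real.norm_eq_abs, sq_abs] at h3
  have h4 : ⟪q, x - z⟫ = -⟪q, y - x⟫ - ⟪q, z - y⟫ := by
    rw [← inner_neg_right, ← inner_sub_right]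
    congr 1
    abel
  rw [h4]
  linarith

end Prox

lemma convex_simplex (n : ℕ) :
    Convex ℝ {p : EuclideanSpace ℝ (Fin n) | (∀ i, 0 ≤ p i) ∧ ∑ i, p i = 1} := by
  rintro x ⟨hx, hx1⟩ y ⟨hy, hy1⟩ a b ha hb hab
  refine ⟨fun i => ?_, ?_⟩
  · have := mul_nonneg ha (hx i)
    have := mul_nonneg hb (hy i)
    simp only [PiLp.add_apply, PiLp.smul_apply, smul_eq_mul]
    linarith
  · simp only [PiLp.add_apply, PiLp.smul_apply, smul_eq_mul, Finset.sum_add_distrib,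
      ← Finset.mul_sum, hx1, hy1]
    linarith

/-- Hölder's inequality, with the fact that two points of the simplex are at `ℓ¹`-distance at
most `2`. -/
lemma inner_error_le {n : ℕ} {ε : ℝ} {q r x z : EuclideanSpace ℝ (Fin n)}
    (hqr : ∀ i, |r i - q i| ≤ ε)
    (hx : (∀ i, 0 ≤ x i) ∧ ∑ i, x i = 1) (hz : (∀ i, 0 ≤ z i) ∧ ∑ i, z i = 1) :
    ⟪q, x - z⟫ ≤ ⟪r, x - z⟫ + 2 * ε := by
  have h : ∑ i, (q i - r i) * (x i - z i) ≤ ∑ i, ε * (x i + z i) := by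
    refine Finset.sum_le_sum fun i _ => ?_
    obtain ⟨h1, h2⟩ := abs_le.1 (hqr i)
    have := mul_nonneg (sub_nonneg.2 h2) (hx.1 i)
    have := mul_nonneg (sub_nonneg.2 h1) (hx.1 i)
    have := mul_nonneg (sub_nonneg.2 h2) (hz.1 i)
    have := mul_nonneg (sub_nonneg.2 h1) (hz.1 i)
    linarith
  rw [← Finset.mul_sum, Finset.sum_add_distrib, hx.2, hz.2] at h
  have e : ⟪q, x - z⟫ - ⟪r, x - z⟫ = ∑ i, (q i - r i) * (x i - z i) := by
    rw [← inner_sub_left, PiLp.inner_apply]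
    refine Finset.sum_congr rfl fun i _ => ?_
    simp [mul_comm]
  linarith

/-- telescoped mirror-descent regret bound with inexact gradients.
On the probability simplex `K ⊆ ℝⁿ`, running proximal steps
`π_{t+1} = argmin_{p ∈ K} { η·⟨Q̂_t, p⟩ + ‖p − π_t‖² }` with gradient estimates
`‖Q̂_t‖₂ ≤ Q_max` and `‖Q̂_t − Q_t‖_∞ ≤ ε` yields, for every `z ∈ K`,
`(1/T)·∑_{t<T} ⟨Q_t, π_t − z⟩ ≤ η·Q_max²/2 + ‖z − π_0‖²/(η·T) + 2ε`. -/
theorem mirror_descent_regret (n : ℕ) (hn : 1 ≤ n)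
    (K : Set (EuclideanSpace ℝ (Fin n)))
    (hK : K = {p : EuclideanSpace ℝ (Fin n) | (∀ i, 0 ≤ p i) ∧ ∑ i, p i = 1})
    (T : ℕ) (hT : 1 ≤ T) (η : ℝ) (hη : 0 < η)
    (Qmax : ℝ) (hQmax : 0 ≤ Qmax) (ε : ℝ) (hε : 0 ≤ ε)
    (Q Qhat : ℕ → EuclideanSpace ℝ (Fin n))
    (hQhat_bound : ∀ t < T, ‖Qhat t‖ ≤ Qmax)
    (hQhat_err : ∀ t < T, ∀ i, |Qhat t i - Q t i| ≤ ε)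
    (π : ℕ → EuclideanSpace ℝ (Fin n))
    (hπK : ∀ t ≤ T, π t ∈ K)
    (hmin : ∀ t < T, ∀ p ∈ K,
      η * ⟪Qhat t, π (t + 1)⟫ + ‖π (t + 1) - π t‖ ^ 2 ≤ η * ⟪Qhat t, p⟫ + ‖p - π t‖ ^ 2) :
    ∀ z ∈ K,
      (1 / (T : ℝ)) * ∑ t ∈ Finset.range T, ⟪Q t, π t - z⟫ ≤
        η * Qmax ^ 2 / 2 + ‖z - π 0‖ ^ 2 / (η * T) + 2 * ε := by
  intro z hz
  have hconv : Convex ℝ K := hK ▸ convex_simplex n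
  have hstep : ∀ t ∈ Finset.range T, ⟪Q t, π t - z⟫ ≤
      (η * Qmax ^ 2 / 2 + 2 * ε) + (‖z - π t‖ ^ 2 / η - ‖z - π (t + 1)‖ ^ 2 / η) := by
    intro t ht
    have ht' := Finset.mem_range.1 ht
    have h1 := prox_step hconv (hπK (t + 1) ht') hz (hmin t ht')
    have hx := hπK t ht'.le
    have hz' := hz
    rw [hK] at hx hz'
    have h2 := inner_error_le (hQhat_err t ht') hx hz'
    have h3 : ‖Qhat t‖ ^ 2 ≤ Qmax ^ 2 := pow_le_pow_left₀ (norm_nonneg _) (hQhat_bound t ht') 2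
    have h4 : ⟪Qhat t, π t - z⟫ ≤
        (‖z - π t‖ ^ 2 - ‖z - π (t + 1)‖ ^ 2 + η ^ 2 * ‖Qhat t‖ ^ 2 / 4) / η := by
      rw [le_div_iff₀ hη]
      linarith
    have h5 : (‖z - π t‖ ^ 2 - ‖z - π (t + 1)‖ ^ 2 + η ^ 2 * ‖Qhat t‖ ^ 2 / 4) / η =
        ‖z - π t‖ ^ 2 / η - ‖z - π (t + 1)‖ ^ 2 / η + η * ‖Qhat t‖ ^ 2 / 4 := by
      field_simp
    have h6 := mul_le_mul_of_nonneg_left h3 hη.le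
    have h7 : 0 ≤ η * Qmax ^ 2 := by positivity
    linarith
  have hsum := Finset.sum_le_sum hstep
  rw [Finset.sum_add_distrib, Finset.sum_range_sub' (fun t => ‖z - π t‖ ^ 2 / η),
    Finset.sum_const, Finset.card_range, nsmul_eq_mul] at hsum
  have hT' : (0 : ℝ) < T := by exact_mod_cast hT
  have hlast : 0 ≤ ‖z - π T‖ ^ 2 / η := by positivity
  rw [one_div, inv_mul_le_iff₀ hT']
  have e : (T : ℝ) * (η * Qmax ^ 2 / 2 + ‖z - π 0‖ ^ 2 / (η * T) + 2 * ε) =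
      T * (η * Qmax ^ 2 / 2 + 2 * ε) + ‖z - π 0‖ ^ 2 / η := by
    field_simp
    ring
  linarith
end

section
/- Let S be a finite nonempty type, let M : Matrix S S ℝ be row-stochastic, let r, V : S → ℝ and g ∈ ℝ. Suppose the Bellman (Poisson) equation holds: V s = r s − g + ∑_{s'} M s s' · V s' for every s ∈ S. Then for every s ∈ S, the Cesàro averages (1/T)·∑_{t=0}^{T−1} (Mᵗ.mulVec r) s converge to g as T → ∞. (A solution of the average-cost Bellman equation identifies the long-run average cost, a component of Theorem 1.) -/
/-!
Write the Bellman equation as `r = g • 1 + V - M V`. Since `Mᵗ 1 = 1`, applying `Mᵗ` gives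
`Mᵗ r = g • 1 + Mᵗ V - Mᵗ⁺¹ V`, so the sum over `t < T` telescopes to `T g + V - M ^ T V`
(`sum_pow_mulVec_of_bellman`). A stochastic matrix does not
increase the sup norm, so `M ^ T V` is bounded in `T` (`abs_pow_mulVec_le`), and dividing by `T`
leaves `g` in the limit.
-/

theorem pow_mulVec_one {S : Type*} [Fintype S] [DecidableEq S]
    (M : Matrix S S ℝ) (hM1 : ∀ s, ∑ s', M s s' = 1) (t : ℕ) :
    (M ^ t).mulVec (fun _ => 1) = fun _ => 1 := by
  induction t with
  | zero => simp
  | succ t ih =>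
    have h : M.mulVec (fun _ => 1) = fun _ => 1 := by
      ext s
      simp [Matrix.mulVec, dotProduct, hM1]
    rw [pow_succ, ← Matrix.mulVec_mulVec, h, ih]

theorem abs_pow_mulVec_le {S : Type*} [Fintype S] [DecidableEq S]
    (M : Matrix S S ℝ) (hM0 : ∀ s s', 0 ≤ M s s') (hM1 : ∀ s, ∑ s', M s s' = 1)
    (V : S → ℝ) (C : ℝ) (hC : ∀ s, |V s| ≤ C) (t : ℕ) :
    ∀ s, |((M ^ t).mulVec V) s| ≤ C := by
  induction t with
  | zero => simpa using hC
  | succ t ih =>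
    intro s
    rw [pow_succ', ← Matrix.mulVec_mulVec]
    calc |(M.mulVec ((M ^ t).mulVec V)) s|
        ≤ ∑ s', |M s s' * ((M ^ t).mulVec V) s'| := Finset.abs_sum_le_sum_abs _ _
      _ ≤ ∑ s', M s s' * C := by
          refine Finset.sum_le_sum fun s' _ => ?_
          rw [abs_mul, abs_of_nonneg (hM0 s s')]
          exact mul_le_mul_of_nonneg_left (ih s') (hM0 s s')
      _ = C := by rw [← Finset.sum_mul, hM1, one_mul]

theorem sum_pow_mulVec_of_bellman {S : Type*} [Fintype S] [DecidableEq S]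
    (M : Matrix S S ℝ) (hM1 : ∀ s, ∑ s', M s s' = 1) (r V : S → ℝ) (g : ℝ)
    (hbell : ∀ s, V s = r s - g + ∑ s', M s s' * V s') (s : S) (T : ℕ) :
    ∑ t ∈ Finset.range T, ((M ^ t).mulVec r) s = T * g + V s - ((M ^ T).mulVec V) s := by
  have hr : r = g • (fun _ => (1 : ℝ)) + V - M.mulVec V := by
    ext s
    have h := hbell s
    simp only [Pi.add_apply, Pi.sub_apply, Pi.smul_apply, smul_eq_mul, Matrix.mulVec, dotProduct]
    linarith
  induction T with
  | zero => simp
  | succ T ih =>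
    have hT : ((M ^ T).mulVec r) s = g + ((M ^ T).mulVec V) s - ((M ^ (T + 1)).mulVec V) s := by
      rw [hr, Matrix.mulVec_sub, Matrix.mulVec_add, Matrix.mulVec_smul, pow_mulVec_one M hM1,
        Matrix.mulVec_mulVec, ← pow_succ]
      simp
    rw [Finset.sum_range_succ, ih, hT]
    push_cast
    ring

/-- If `(g, V)` solves the average-cost Bellman (Poisson) equation
`V s = r s − g + ∑_{s'} M s s' · V s'` for a row-stochastic matrix `M`, then for
every starting state `s` the Cesàro averages `(1/T)·∑_{t<T} (Mᵗ.mulVec r) s`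
converge to `g` as `T → ∞`. -/
theorem bellman_identifies_average_cost {S : Type*} [Fintype S] [DecidableEq S] [Nonempty S]
    (M : Matrix S S ℝ) (hM0 : ∀ s s', 0 ≤ M s s') (hM1 : ∀ s, ∑ s', M s s' = 1)
    (r V : S → ℝ) (g : ℝ)
    (hbell : ∀ s, V s = r s - g + ∑ s', M s s' * V s') :
    ∀ s, Filter.Tendsto
      (fun T : ℕ => (1 / (T : ℝ)) * ∑ t ∈ Finset.range T, ((M ^ t).mulVec r) s)
      Filter.atTop (nhds g) := by
  intro s
  obtain ⟨C, hC⟩ : ∃ C, ∀ s, |V s| ≤ C := ⟨‖V‖, fun s => norm_le_pi_norm V s⟩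
  have hbound : ∀ T : ℕ, |V s - ((M ^ T).mulVec V) s| ≤ C + C := fun T =>
    (abs_sub _ _).trans (add_le_add (hC s) (abs_pow_mulVec_le M hM0 hM1 V C hC T s))
  have hzero : Filter.Tendsto
      (fun T : ℕ => (1 / (T : ℝ)) * (V s - ((M ^ T).mulVec V) s)) Filter.atTop (nhds 0) := by
    refine squeeze_zero_norm (a := fun T : ℕ => (1 / (T : ℝ)) * (C + C)) (fun T => ?_) ?_
    · rw [Real.norm_eq_abs, abs_mul, abs_of_nonneg (by positivity : (0 : ℝ) ≤ 1 / (T : ℝ))]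
      exact mul_le_mul_of_nonneg_left (hbound T) (by positivity)
    · simpa using tendsto_one_div_atTop_nhds_zero_nat.mul_const (C + C)
  have hlim := hzero.const_add g
  rw [add_zero] at hlim
  -- The average at `T = 0` is a junk value, so the two sequences agree only from `T = 1` on.
  refine hlim.congr' ?_
  filter_upwards [Filter.eventually_gt_atTop 0] with T hT
  have hT' : (T : ℝ) ≠ 0 := by positivity
  rw [sum_pow_mulVec_of_bellman M hM1 r V g hbell s T]
  field_simp
  ring
end
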